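/- arXiv:1903.10857 — 2 statements merged into one kernel-verified Lean document; each statement's English description precedes it below -/
import Mathlib

section
/- Let X be a real inner product space with norm ‖·‖_X, let W ⊆ X be a subspace equipped with a norm ‖·‖_W, and let λ₁ > 0 and 0 < ν ≤ 1 satisfy λ₁·ν·‖w‖_X² ≤ ‖w‖_W² for all w ∈ W. Let Δt > 0 and suppose elements uⁿ, uⁿ⁺¹, ūⁿ, ūⁿ⁺¹ ∈ W and fⁿ, f̄ⁿ⁺¹ ∈ X satisfy: (i) the predictor energy equation (1/Δt)·⟨ūⁿ⁺¹ − uⁿ, uⁿ⟩ + ‖uⁿ‖_W² = ⟨fⁿ, uⁿ⟩; (ii) the corrector energy equation (1/Δt)·⟨2uⁿ⁺¹ − ūⁿ⁺¹ − uⁿ, ūⁿ⁺¹⟩ + ‖ūⁿ⁺¹‖_W² = ⟨f̄ⁿ⁺¹, ūⁿ⁺¹⟩; (iii) the midpoint relations ūⁿ⁺¹ = (uⁿ⁺¹ + uⁿ)/2 and uⁿ = (ūⁿ⁺¹ + ūⁿ)/2. Then the one-step stability inequality holds: 3·(‖uⁿ⁺¹‖_X² − ‖uⁿ‖_X²) +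 ‖ūⁿ⁺¹‖_X² − ‖ūⁿ‖_X² + 2νΔt·(‖uⁿ‖_W² + ‖ūⁿ⁺¹‖_W²) ≤ (2Δt/(λ₁ν²))·(‖f̄ⁿ⁺¹‖_X² + ‖fⁿ‖_X²). (Abstract form of the per-step estimate (16*) in the proof of Lemma 1.) -/
open scoped RealInnerProductSpace

/-- Abstract one-step stability inequality (16*) for the explicit MacCormack scheme. -/
theorem stmt_3 {X : Type*} [NormedAddCommGroup X] [InnerProductSpace ℝ X]
    (W : Submodule ℝ X) (nW : W → ℝ) (lam ν : ℝ) (hlam : 0 < lam)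
    (hν0 : 0 < ν) (hν1 : ν ≤ 1)
    (hPoincare : ∀ w : W, lam * ν * ‖(w : X)‖ ^ 2 ≤ (nW w) ^ 2)
    (Δt : ℝ) (hΔt : 0 < Δt)
    (un un1 ubn ubn1 : W) (fn fbn1 : X)
    (hpred : (1 / Δt) * ⟪(ubn1 : X) - (un : X), (un : X)⟫ + (nW un) ^ 2
        = ⟪fn, (un : X)⟫)
    (hcorr : (1 / Δt) * ⟪(2:ℝ) • (un1 : X) - (ubn1 : X) - (un : X), (ubn1 : X)⟫
          + (nW ubn1) ^ 2
        = ⟪fbn1, (ubn1 : X)⟫)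
    (hmid1 : ubn1 = (2:ℝ)⁻¹ • (un1 + un))
    (hmid2 : un = (2:ℝ)⁻¹ • (ubn1 + ubn)) :
    3 * (‖(un1 : X)‖ ^ 2 - ‖(un : X)‖ ^ 2) + ‖(ubn1 : X)‖ ^ 2 - ‖(ubn : X)‖ ^ 2
        + 2 * ν * Δt * ((nW un) ^ 2 + (nW ubn1) ^ 2)
      ≤ (2 * Δt / (lam * ν ^ 2)) * (‖fbn1‖ ^ 2 + ‖fn‖ ^ 2) := by
  have key : ∀ (w : W) (f : X), 4 * ⟪f, (w : X)⟫ - (4 - 2 * ν) * (nW w) ^ 2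
      ≤ 2 / (lam * ν ^ 2) * ‖f‖ ^ 2 := by
    intro w f
    have h1 := real_inner_le_norm f (w : X)
    have h2 := hPoincare w
    have hc : 0 < lam * ν ^ 2 := by positivity
    have h3 : 2 * ν * (lam * ν * ‖(w : X)‖ ^ 2) ≤ (4 - 2 * ν) * (nW w) ^ 2 :=
      mul_le_mul (by linarith) h2 (by positivity) (by linarith)
    have h4 : 4 * (‖f‖ * ‖(w : X)‖) - 2 * (lam * ν ^ 2) * ‖(w : X)‖ ^ 2
        ≤ 2 / (lam * ν ^ 2) * ‖f‖ ^ 2 := by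
      rw [div_mul_eq_mul_div, le_div_iff₀ hc]
      nlinarith [sq_nonneg (‖f‖ - lam * ν ^ 2 * ‖(w : X)‖)]
    nlinarith
  have e1 : (un1 : X) = (2:ℝ) • (ubn1 : X) - (un : X) := by
    rw [hmid1]; push_cast; module
  have e2 : (ubn : X) = (2:ℝ) • (un : X) - (ubn1 : X) := by
    have := congrArg (Subtype.val) hmid2
    push_cast at this
    rw [this]; module
  have k1 := mul_le_mul_of_nonneg_left (key un fn) hΔt.le
  have k2 := mul_le_mul_of_nonneg_left (key ubn1 fbn1) hΔt.le
  clear hmid1 hmid2 key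
  rw [e1] at hcorr ⊢
  rw [e2]
  rw [← hpred] at k1
  rw [← hcorr] at k2
  generalize (un : X) = a at *
  generalize (ubn1 : X) = b at *
  have n1 : ‖(2:ℝ) • b - a‖ ^ 2 = 4 * ‖b‖ ^ 2 - 4 * ⟪b, a⟫ + ‖a‖ ^ 2 := by
    rw [norm_sub_sq_real, norm_smul, real_inner_smul_left]; norm_num; ring
  have n2 : ‖(2:ℝ) • a - b‖ ^ 2 = 4 * ‖a‖ ^ 2 - 4 * ⟪b, a⟫ + ‖b‖ ^ 2 := by
    rw [norm_sub_sq_real, norm_smul, real_inner_smul_left, real_inner_comm]; norm_num; ring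
  have i1 : ⟪b - a, a⟫ = ⟪b, a⟫ - ‖a‖ ^ 2 := by
    rw [inner_sub_left, real_inner_self_eq_norm_sq]
  have i2 : ⟪(2:ℝ) • ((2:ℝ) • b - a) - b - a, b⟫ = 3 * ‖b‖ ^ 2 - 3 * ⟪b, a⟫ := by
    simp only [inner_sub_left, real_inner_smul_left, real_inner_self_eq_norm_sq,
      real_inner_comm b a]
    ring
  rw [i1] at k1
  rw [i2] at k2
  rw [n1, n2]
  have hd : Δt * (1 / Δt) = 1 := by field_simp
  have m1 : ∀ x y z : ℝ, Δt * (4 * (1 / Δt * x + y) - z) = 4 * x + Δt * (4 * y - z) := by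
    intro x y z; linear_combination 4 * x * hd
  rw [m1] at k1 k2
  have m2 : 2 * Δt / (lam * ν ^ 2) = Δt * (2 / (lam * ν ^ 2)) := by ring
  rw [m2]
  generalize 2 / (lam * ν ^ 2) = c at *
  nlinarith
end

section
/- Let E be a real normed vector space, let Δt > 0 and N ≥ 1 an integer, set tⁿ = n·Δt for 0 ≤ n ≤ N, and let f : ℝ → E be twice continuously differentiable on [0, N·Δt + Δt/2]. For each 0 ≤ n ≤ N−1 let Mₙ = sup_{s ∈ [tⁿ, tⁿ + Δt/2]} ‖f''(s)‖. Then Δt · Σ_{n=0}^{N−1} ‖(1/2)·f'(tⁿ) − (f(tⁿ + Δt/2) − f(tⁿ))/Δt‖² ≤ (Δt³/64) · Σ_{n=0}^{N−1} Mₙ². (Estimate (53n): the accumulated predictor consistency error Δt·Σₙ‖(1/2)u_t^n − (u^{n̄+1} − u^n)/Δt‖² is bounded by (Δt²/64) times the discrete L²-in-time norm of u_tt.) -/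
theorem taylor_two_aux {E : Type*} [NormedAddCommGroup E] [NormedSpace ℝ E]
    (T a b C : ℝ) (ha : 0 ≤ a) (hab : a < b) (hb : b ≤ T) (f : ℝ → E)
    (hf : ContDiffOn ℝ 2 f (Set.Icc 0 T))
    (hC : ∀ s ∈ Set.Icc a b, ‖iteratedDerivWithin 2 f (Set.Icc 0 T) s‖ ≤ C) :
    ‖f b - f a - (b - a) • derivWithin f (Set.Icc 0 T) a‖ ≤ C * (b - a) ^ 2 / 2 := by
  have hT : 0 < T := by linarith
  have hu : UniqueDiffOn ℝ (Set.Icc 0 T) := uniqueDiffOn_Icc hT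
  have hsub : Set.Icc a b ⊆ Set.Icc 0 T := Set.Icc_subset_Icc ha hb
  have hd1 : DifferentiableOn ℝ f (Set.Icc 0 T) := hf.differentiableOn (by norm_num)
  have hd2 : DifferentiableOn ℝ (derivWithin f (Set.Icc 0 T)) (Set.Icc 0 T) := by
    have h := hf.differentiableOn_iteratedDerivWithin (m := 1) (by norm_num) hu
    rwa [iteratedDerivWithin_one] at h
  have hmem : ∀ x ∈ Set.Ico a b, Set.Icc 0 T ∈ nhdsWithin x (Set.Ici x) := fun x hx =>
    Filter.mem_of_superset (Icc_mem_nhdsGE (lt_of_lt_of_le hx.2 hb))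
      (Set.Icc_subset_Icc_left (ha.trans hx.1))
  have h1 : ∀ x ∈ Set.Icc a b,
      ‖derivWithin f (Set.Icc 0 T) x - derivWithin f (Set.Icc 0 T) a‖ ≤ C * (x - a) := by
    refine norm_image_sub_le_of_norm_deriv_right_le_segment
      (f' := iteratedDerivWithin 2 f (Set.Icc 0 T)) (hd2.continuousOn.mono hsub) ?_ ?_
    · intro x hx
      have hx' := hsub (Set.Ico_subset_Icc_self hx)
      have h := (hd2 x hx').hasDerivWithinAt.mono_of_mem_nhdsWithin (hmem x hx)
      have e : iteratedDerivWithin 2 f (Set.Icc 0 T) x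
          = derivWithin (derivWithin f (Set.Icc 0 T)) (Set.Icc 0 T) x := by
        rw [iteratedDerivWithin_succ, iteratedDerivWithin_one]
      rwa [e]
    · exact fun x hx => hC x (Set.Ico_subset_Icc_self hx)
  refine image_norm_le_of_norm_deriv_right_le_deriv_boundary
    (f := fun x => f x - f a - (x - a) • derivWithin f (Set.Icc 0 T) a)
    (f' := fun x => derivWithin f (Set.Icc 0 T) x - derivWithin f (Set.Icc 0 T) a)
    (B := fun x => C * (x - a) ^ 2 / 2) (B' := fun x => C * (x - a))
    (a := a) (b := b) ?_ ?_ ?_ ?_ ?_ (Set.right_mem_Icc.2 hab.le)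
  · have := hd1.continuousOn.mono hsub
    fun_prop
  · intro x hx
    have hx' := hsub (Set.Ico_subset_Icc_self hx)
    have h := (hd1 x hx').hasDerivWithinAt.mono_of_mem_nhdsWithin (hmem x hx)
    have h2 : HasDerivWithinAt (fun x : ℝ => (x - a) • derivWithin f (Set.Icc 0 T) a)
        ((1 : ℝ) • derivWithin f (Set.Icc 0 T) a) (Set.Ici x) x :=
      ((hasDerivWithinAt_id x _).sub_const a).smul_const _
    rw [one_smul] at h2
    exact (h.sub_const (f a)).sub h2
  · simp
  · intro x
    have h := ((((hasDerivAt_id x).sub_const a).pow 2).const_mul C).div_const 2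
    refine h.congr_deriv ?_
    simp
    ring
  · exact fun x hx => h1 x (Set.Ico_subset_Icc_self hx)

/-- Estimate (53n): accumulated predictor consistency error
`Δt·Σ_{n<N} ‖(1/2)f'(tⁿ) − (f(tⁿ+Δt/2) − f(tⁿ))/Δt‖² ≤ (Δt³/64)·Σ_{n<N} Mₙ²`,
where `Mₙ = sup_{s ∈ [tⁿ, tⁿ+Δt/2]} ‖f''(s)‖`. -/
theorem stmt_16 {E : Type*} [NormedAddCommGroup E] [NormedSpace ℝ E]
    (Δt : ℝ) (hΔt : 0 < Δt) (N : ℕ) (hN : 1 ≤ N) (f : ℝ → E)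
    (hf : ContDiffOn ℝ 2 f (Set.Icc 0 ((N : ℝ) * Δt + Δt / 2)))
    (M : ℕ → ℝ)
    (hM : ∀ n < N, M n =
        ⨆ s : Set.Icc ((n : ℝ) * Δt) ((n : ℝ) * Δt + Δt / 2),
          ‖iteratedDerivWithin 2 f (Set.Icc 0 ((N : ℝ) * Δt + Δt / 2)) (s : ℝ)‖) :
    Δt * ∑ n ∈ Finset.range N,
        ‖(2:ℝ)⁻¹ • derivWithin f (Set.Icc 0 ((N : ℝ) * Δt + Δt / 2)) ((n : ℝ) * Δt)
          - Δt⁻¹ • (f ((n : ℝ) * Δt + Δt / 2) - f ((n : ℝ) * Δt))‖ ^ 2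
      ≤ Δt ^ 3 / 64 * ∑ n ∈ Finset.range N, (M n) ^ 2 := by
  set T : ℝ := (N : ℝ) * Δt + Δt / 2 with hTdef
  have hT : 0 < T := by positivity
  rw [Finset.mul_sum, Finset.mul_sum]
  refine Finset.sum_le_sum fun n hn => ?_
  have hn' : n < N := Finset.mem_range.1 hn
  have hnN : (n : ℝ) ≤ N := by exact_mod_cast hn'.le
  have ha : 0 ≤ (n : ℝ) * Δt := by positivity
  have hb : (n : ℝ) * Δt + Δt / 2 ≤ T := by
    rw [hTdef]; gcongr
  have hcont : ContinuousOn (fun s => ‖iteratedDerivWithin 2 f (Set.Icc 0 T) s‖)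
      (Set.Icc ((n : ℝ) * Δt) ((n : ℝ) * Δt + Δt / 2)) :=
    ((hf.continuousOn_iteratedDerivWithin le_rfl (uniqueDiffOn_Icc hT)).norm).mono
      (Set.Icc_subset_Icc ha hb)
  have hbdd : BddAbove (Set.range fun s : Set.Icc ((n : ℝ) * Δt) ((n : ℝ) * Δt + Δt / 2) =>
      ‖iteratedDerivWithin 2 f (Set.Icc 0 T) (s : ℝ)‖) := by
    have h := isCompact_Icc.bddAbove_image hcont
    rwa [Set.image_eq_range] at h
  have hC : ∀ s ∈ Set.Icc ((n : ℝ) * Δt) ((n : ℝ) * Δt + Δt / 2),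
      ‖iteratedDerivWithin 2 f (Set.Icc 0 T) s‖ ≤ M n := by
    intro s hs
    rw [hM n hn']
    exact le_ciSup hbdd ⟨s, hs⟩
  have key := taylor_two_aux T _ _ (M n) ha (by linarith) hb f hf hC
  rw [add_sub_cancel_left] at key
  have e : (2:ℝ)⁻¹ • derivWithin f (Set.Icc 0 T) ((n : ℝ) * Δt)
          - Δt⁻¹ • (f ((n : ℝ) * Δt + Δt / 2) - f ((n : ℝ) * Δt))
      = -(Δt⁻¹ • (f ((n : ℝ) * Δt + Δt / 2) - f ((n : ℝ) * Δt)
          - (Δt / 2) • derivWithin f (Set.Icc 0 T) ((n : ℝ) * Δt))) := by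
    have h2 : Δt⁻¹ * (Δt / 2) = (2:ℝ)⁻¹ := by field_simp
    rw [smul_sub _ (_ - _), smul_smul, h2, neg_sub]
  have hle : ‖(2:ℝ)⁻¹ • derivWithin f (Set.Icc 0 T) ((n : ℝ) * Δt)
          - Δt⁻¹ • (f ((n : ℝ) * Δt + Δt / 2) - f ((n : ℝ) * Δt))‖ ≤ M n * Δt / 8 := by
    rw [e, norm_neg, norm_smul, Real.norm_of_nonneg (by positivity)]
    calc _ ≤ Δt⁻¹ * (M n * (Δt / 2) ^ 2 / 2) := by gcongr
      _ = _ := by field_simp; norm_num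
  calc _ ≤ Δt * (M n * Δt / 8) ^ 2 := by gcongr
    _ = _ := by ring
end
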